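/- Suppose 0 < r₁ < r₂ < 1, γ₁, γ₂ > 0, μ > 0 and r₁·γ₁ ≤ r₂·γ₂. Then for every τ ≥ 0 and every pair of allocations u₁, u₂ ≥ 0 with u₁ + u₂ ≤ 1, one has u₁·K₁(τ) + u₂·K₂(τ) ≥ K₁(τ), where K_i(τ) = μ·((r_i−1)·τ − (r_i/γ_i)·(1 − e^{−γ_i τ})). That is, devoting full capacity to class 1 pointwise minimizes the Hamiltonian coefficient sum over the capacity simplex. -/

import Mathlib

/-!
Since `K(τ) = ∫₀^τ μ (r (1 - e^{-γ s}) - 1) ds`, both `K₁ ≤ 0` and `K₁ ≤ K₂` reduce to inequalities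
between integrands, and these two suffice on the simplex. The second one is
`r₁ f(γ₁ s) ≤ r₂ f(γ₂ s)` for the concave increasing function `f(x) = 1 - e^{-x}`, which vanishes
at `0`: for `0 < r₁ ≤ r₂`, the hypothesis `r₁ γ₁ ≤ r₂ γ₂` puts `γ₂ s` to the right of
`(r₁ / r₂) γ₁ s`, and `f (t x) ≥ t f x` for `t ∈ [0, 1]`. If both `r₁` and `r₂` are negative, the
same argument applies to `-r₂ ≤ -r₁`; if `r₁ ≤ 0 ≤ r₂`, then `0` separates the two sides.
-/

open Set

section OrderedField

variable {𝕜 : Type*} [Field 𝕜] [LinearOrder 𝕜] [IsStrictOrderedRing 𝕜] {f : 𝕜 → 𝕜} {r₁ r₂ x y : 𝕜}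

lemma mul_apply_le_apply_mul_of_concaveOn {t : 𝕜} (hf : ConcaveOn 𝕜 (Ici 0) f) (hf₀ : 0 ≤ f 0)
    (hx : 0 ≤ x) (ht₀ : 0 ≤ t) (ht₁ : t ≤ 1) : t * f x ≤ f (t * x) := by
  have hconcave := hf.2 (mem_Ici.2 hx) self_mem_Ici ht₀ (sub_nonneg.2 ht₁) (add_sub_cancel t 1)
  simp only [smul_eq_mul, mul_zero, add_zero] at hconcave
  exact (le_add_of_nonneg_right (mul_nonneg (sub_nonneg.2 ht₁) hf₀)).trans hconcave

lemma mul_apply_le_mul_apply_of_concaveOn_of_nonneg (hf : ConcaveOn 𝕜 (Ici 0) f)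
    (hmono : MonotoneOn f (Ici 0)) (hf₀ : 0 ≤ f 0) (hx : 0 ≤ x) (hy : 0 ≤ y) (hr₁ : 0 ≤ r₁)
    (hr : r₁ ≤ r₂) (hxy : r₁ * x ≤ r₂ * y) : r₁ * f x ≤ r₂ * f y := by
  obtain rfl | hr₁ := hr₁.eq_or_lt
  · simpa only [zero_mul] using mul_nonneg hr (hf₀.trans (hmono self_mem_Ici hy hy))
  have hr₂ : 0 < r₂ := hr₁.trans_le hr
  have hratio : 0 ≤ r₁ / r₂ := by positivity
  have hle : r₁ / r₂ * x ≤ y := by rwa [div_mul_eq_mul_div, div_le_iff₀' hr₂]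
  calc r₁ * f x = r₂ * (r₁ / r₂ * f x) := by field_simp
    _ ≤ r₂ * f (r₁ / r₂ * x) := by
      gcongr
      exact mul_apply_le_apply_mul_of_concaveOn hf hf₀ hx hratio ((div_le_one hr₂).2 hr)
    _ ≤ r₂ * f y := by
      gcongr
      exact hmono (mul_nonneg hratio hx) hy hle

lemma mul_apply_le_mul_apply_of_concaveOn (hf : ConcaveOn 𝕜 (Ici 0) f)
    (hmono : MonotoneOn f (Ici 0)) (hf₀ : 0 ≤ f 0) (hx : 0 ≤ x) (hy : 0 ≤ y)
    (hr : r₁ ≤ r₂) (hxy : r₁ * x ≤ r₂ * y) : r₁ * f x ≤ r₂ * f y := by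
  have hnonneg {z : 𝕜} (hz : 0 ≤ z) : 0 ≤ f z := hf₀.trans (hmono self_mem_Ici hz hz)
  rcases le_total 0 r₁ with hr₁ | hr₁
  · exact mul_apply_le_mul_apply_of_concaveOn_of_nonneg hf hmono hf₀ hx hy hr₁ hr hxy
  rcases le_total 0 r₂ with hr₂ | hr₂
  · exact (mul_nonpos_of_nonpos_of_nonneg hr₁ (hnonneg hx)).trans (mul_nonneg hr₂ (hnonneg hy))
  · have hneg : -r₂ * f y ≤ -r₁ * f x :=
      mul_apply_le_mul_apply_of_concaveOn_of_nonneg hf hmono hf₀ hy hx (neg_nonneg.2 hr₂)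
        (neg_le_neg hr) (by simpa only [neg_mul, neg_le_neg_iff] using hxy)
    simpa only [neg_mul, neg_le_neg_iff] using hneg

end OrderedField

lemma le_mul_add_mul_of_nonpos_of_le {R : Type*} [Ring R] [PartialOrder R] [IsOrderedRing R]
    {a b u v : R} (ha : a ≤ 0) (hab : a ≤ b) (hv : 0 ≤ v) (huv : u + v ≤ 1) :
    a ≤ u * a + v * b :=
  calc a = 1 * a := (one_mul a).symm
    _ ≤ (u + v) * a := mul_le_mul_of_nonpos_right huv ha
    _ = u * a + v * a := add_mul u v a
    _ ≤ u * a + v * b := by gcongr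

lemma concaveOn_one_sub_exp_neg : ConcaveOn ℝ univ fun x : ℝ ↦ 1 - Real.exp (-x) :=
  (concaveOn_const 1 convex_univ).sub (convexOn_exp.comp_linearMap (-LinearMap.id))

lemma monotone_one_sub_exp_neg : Monotone fun x : ℝ ↦ 1 - Real.exp (-x) :=
  fun _ _ hxy ↦ sub_le_sub_left (Real.exp_le_exp.2 (neg_le_neg hxy)) 1

lemma mul_one_sub_exp_neg_le_one {r x : ℝ} (hr : r ≤ 1) (hx : 0 ≤ x) :
    r * (1 - Real.exp (-x)) ≤ 1 := by
  have hexp_le : Real.exp (-x) ≤ 1 := Real.exp_le_one_iff.2 (neg_nonpos.2 hx)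
  calc r * (1 - Real.exp (-x)) ≤ 1 * (1 - Real.exp (-x)) :=
        mul_le_mul_of_nonneg_right hr (sub_nonneg.2 hexp_le)
    _ ≤ 1 := by linarith [Real.exp_pos (-x)]

/-- The density of the cumulative kernel of a class with parameters `r` and `γ`, that is, the
derivative `K'(s)`. -/
noncomputable def kernelDensity (μ r γ s : ℝ) : ℝ :=
  μ * (r * (1 - Real.exp (-(γ * s))) - 1)

/-- The cumulative kernel `K(τ)` of a class, as the integral of its density; unlike the closed form,
which divides by `γ`, this is also meaningful at `γ = 0`. -/
noncomputable def cumulativeKernel (μ r γ τ : ℝ) : ℝ :=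
  ∫ s in 0..τ, kernelDensity μ r γ s

section Kernel

variable {μ r r₁ r₂ γ γ₁ γ₂ s τ : ℝ}

lemma continuous_kernelDensity : Continuous (kernelDensity μ r γ) := by
  unfold kernelDensity
  fun_prop

lemma kernelDensity_nonpos (hμ : 0 ≤ μ) (hr : r ≤ 1) (hγ : 0 ≤ γ) (hs : 0 ≤ s) :
    kernelDensity μ r γ s ≤ 0 :=
  mul_nonpos_of_nonneg_of_nonpos hμ
    (sub_nonpos.2 (mul_one_sub_exp_neg_le_one hr (mul_nonneg hγ hs)))

lemma kernelDensity_le_kernelDensity (hμ : 0 ≤ μ) (hr : r₁ ≤ r₂) (hγ₁ : 0 ≤ γ₁) (hγ₂ : 0 ≤ γ₂)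
    (hκ : r₁ * γ₁ ≤ r₂ * γ₂) (hs : 0 ≤ s) :
    kernelDensity μ r₁ γ₁ s ≤ kernelDensity μ r₂ γ₂ s := by
  have hκs : r₁ * (γ₁ * s) ≤ r₂ * (γ₂ * s) := by
    simpa only [mul_assoc] using mul_le_mul_of_nonneg_right hκ hs
  have hle : r₁ * (1 - Real.exp (-(γ₁ * s))) ≤ r₂ * (1 - Real.exp (-(γ₂ * s))) :=
    mul_apply_le_mul_apply_of_concaveOn (f := fun x ↦ 1 - Real.exp (-x))
      (concaveOn_one_sub_exp_neg.subset (subset_univ _) (convex_Ici 0))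
      (monotone_one_sub_exp_neg.monotoneOn _) (by simp) (mul_nonneg hγ₁ hs) (mul_nonneg hγ₂ hs)
      hr hκs
  exact mul_le_mul_of_nonneg_left (sub_le_sub_right hle 1) hμ

lemma cumulativeKernel_nonpos (hμ : 0 ≤ μ) (hr : r ≤ 1) (hγ : 0 ≤ γ) (hτ : 0 ≤ τ) :
    cumulativeKernel μ r γ τ ≤ 0 := by
  rw [cumulativeKernel, intervalIntegral.integral_of_le hτ]
  exact MeasureTheory.setIntegral_nonpos measurableSet_Ioc fun _ hs ↦
    kernelDensity_nonpos hμ hr hγ hs.1.le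

lemma cumulativeKernel_le_cumulativeKernel (hμ : 0 ≤ μ) (hr : r₁ ≤ r₂) (hγ₁ : 0 ≤ γ₁)
    (hγ₂ : 0 ≤ γ₂) (hκ : r₁ * γ₁ ≤ r₂ * γ₂) (hτ : 0 ≤ τ) :
    cumulativeKernel μ r₁ γ₁ τ ≤ cumulativeKernel μ r₂ γ₂ τ :=
  intervalIntegral.integral_mono_on hτ (continuous_kernelDensity.intervalIntegrable _ _)
    (continuous_kernelDensity.intervalIntegrable _ _) fun _ hs ↦
      kernelDensity_le_kernelDensity hμ hr hγ₁ hγ₂ hκ hs.1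

lemma integral_exp_neg_mul (hγ : γ ≠ 0) (τ : ℝ) :
    ∫ s in 0..τ, Real.exp (-(γ * s)) = (1 - Real.exp (-γ * τ)) / γ := by
  simp only [← neg_mul]
  rw [intervalIntegral.integral_comp_mul_left Real.exp (neg_ne_zero.2 hγ), integral_exp, mul_zero,
    Real.exp_zero, smul_eq_mul]
  field_simp
  ring

lemma cumulativeKernel_eq (hγ : γ ≠ 0) (μ r τ : ℝ) :
    cumulativeKernel μ r γ τ = μ * ((r - 1) * τ - (r / γ) * (1 - Real.exp (-γ * τ))) := by
  have hexp : IntervalIntegrable (fun s ↦ Real.exp (-(γ * s))) MeasureTheory.volume 0 τ :=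
    Continuous.intervalIntegrable (by fun_prop) _ _
  have hdensity : kernelDensity μ r γ = fun s ↦ μ * ((r - 1) - r * Real.exp (-(γ * s))) := by
    ext s
    unfold kernelDensity
    ring
  rw [cumulativeKernel, hdensity, intervalIntegral.integral_const_mul,
    intervalIntegral.integral_sub intervalIntegrable_const (hexp.const_mul r),
    intervalIntegral.integral_const, intervalIntegral.integral_const_mul, integral_exp_neg_mul hγ,
    sub_zero, smul_eq_mul]
  ring

end Kernel

theorem full_priority_minimizes_hamiltonian_general
    (μ r₁ r₂ γ₁ γ₂ : ℝ) (hμ : 0 ≤ μ) (hr₁ : r₁ ≤ 1) (hr₁₂ : r₁ ≤ r₂)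
    (hγ₁ : 0 < γ₁) (hγ₂ : 0 < γ₂) (hκ : r₁ * γ₁ ≤ r₂ * γ₂)
    (K₁ K₂ : ℝ → ℝ)
    (hK₁ : ∀ τ, K₁ τ = μ * ((r₁ - 1) * τ - (r₁ / γ₁) * (1 - Real.exp (-γ₁ * τ))))
    (hK₂ : ∀ τ, K₂ τ = μ * ((r₂ - 1) * τ - (r₂ / γ₂) * (1 - Real.exp (-γ₂ * τ))))
    (τ : ℝ) (hτ : 0 ≤ τ) (u₁ u₂ : ℝ) (hu₂ : 0 ≤ u₂) (hu : u₁ + u₂ ≤ 1) :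
    K₁ τ ≤ u₁ * K₁ τ + u₂ * K₂ τ := by
  rw [hK₁, hK₂, ← cumulativeKernel_eq hγ₁.ne', ← cumulativeKernel_eq hγ₂.ne']
  exact le_mul_add_mul_of_nonpos_of_le (cumulativeKernel_nonpos hμ hr₁ hγ₁.le hτ)
    (cumulativeKernel_le_cumulativeKernel hμ hr₁₂ hγ₁.le hγ₂.le hκ hτ) hu₂ hu

/-- When `κ₁ = r₁γ₁ ≤ r₂γ₂ = κ₂`, devoting full capacity to class 1 pointwise
minimizes `u₁·K₁(τ) + u₂·K₂(τ)` over the capacity simplex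
`{(u₁,u₂) : u₁,u₂ ≥ 0, u₁+u₂ ≤ 1}`: every feasible allocation satisfies
`u₁·K₁(τ) + u₂·K₂(τ) ≥ K₁(τ)`. -/
theorem full_priority_minimizes_hamiltonian
    (μ r₁ r₂ γ₁ γ₂ : ℝ) (hμ : 0 < μ)
    (hr₁ : 0 < r₁) (hr₁₂ : r₁ < r₂) (hr₂ : r₂ < 1)
    (hγ₁ : 0 < γ₁) (hγ₂ : 0 < γ₂)
    (hκ : r₁ * γ₁ ≤ r₂ * γ₂)
    (K₁ K₂ : ℝ → ℝ)
    (hK₁ : ∀ τ, K₁ τ = μ * ((r₁ - 1) * τ - (r₁ / γ₁) * (1 - Real.exp (-γ₁ * τ))))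
    (hK₂ : ∀ τ, K₂ τ = μ * ((r₂ - 1) * τ - (r₂ / γ₂) * (1 - Real.exp (-γ₂ * τ)))) :
    ∀ τ, 0 ≤ τ → ∀ u₁ u₂ : ℝ, 0 ≤ u₁ → 0 ≤ u₂ → u₁ + u₂ ≤ 1 →
      K₁ τ ≤ u₁ * K₁ τ + u₂ * K₂ τ :=
  fun τ hτ u₁ u₂ _ ↦ full_priority_minimizes_hamiltonian_general μ r₁ r₂ γ₁ γ₂ hμ.le
    (hr₁₂.trans hr₂).le hr₁₂.le hγ₁ hγ₂ hκ K₁ K₂ hK₁ hK₂ τ hτ u₁ u₂
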